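/- There exists a constant C > 0 such that for every n ≥ 1 and every initial configuration w ∈ W_{2n}, the expected convergence time of the cooling process started at w₀ = w satisfies E[T | w₀ = w] ≤ C·n³. In particular, the worst expected convergence time max_{w ∈ W_{2n}} E[T | w₀ = w] is O(n³). -/

import Mathlib

open scoped BigOperators ENNReal

attribute [local instance] Classical.propDecidable

namespace Cooling

/-- Words over the alphabet `{1,2}`, modeled as lists of booleans:
`true` encodes the letter `1`, `false` encodes the letter `2`. -/
abbrev Word := List Bool

/-- `w` is a configuration of length `2*n`: a word of length `2*n` with as many
occurrences of the letter `1` (`true`) as of the letter `2` (`false`). -/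
def IsConfig (n : ℕ) (w : Word) : Prop :=
  w.length = 2 * n ∧ w.count true = n

/-- The (finite) set `W_{2n}` of all configurations of length `2*n`. -/
def configSet (n : ℕ) : Finset Word :=
  ((Finset.univ : Finset (Fin (2 * n) → Bool)).image List.ofFn).filter
    (fun w => w.count true = n)

/-- The number `E(w)` of mismatches of `w`: positions `i` with `w_i = w_{i+1}`. -/
def mismatches (w : Word) : ℕ :=
  (w.zip w.tail).countP (fun p => p.1 == p.2)

/-- The number `F(w)` of flips performable on `w`: positions `i` with `w_i ≠ w_{i+1}`. -/
def flipCount (w : Word) : ℕ :=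
  (w.zip w.tail).countP (fun p => p.1 != p.2)

/-- The word `w^{(i)}` obtained from `w` by exchanging the letters at positions
`i` and `i+1` (0-indexed). -/
def flip (w : Word) (i : ℕ) : Word :=
  (w.set i (w.getD (i + 1) true)).set (i + 1) (w.getD i true)

/-- A flip is permitted at position `i` if both positions `i` and `i+1` exist and the
corresponding letters are different. -/
def CanFlip (w : Word) (i : ℕ) : Prop :=
  i + 1 < w.length ∧ w.getD i true ≠ w.getD (i + 1) true

/-- The set of positions at which a flip is allowed in the cooling process:
positions of permitted flips which do not increase the number of mismatches. -/
noncomputable def allowedFlips (w : Word) : Finset ℕ :=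
  (Finset.range w.length).filter
    (fun i => CanFlip w i ∧ mismatches (flip w i) ≤ mismatches w)

/-- One step of the cooling process: if `E(w) = 0`, stay at `w`; otherwise, perform
a flip chosen uniformly at random among the flips which do not increase the number
of mismatches. -/
noncomputable def coolStep (w : Word) : PMF Word :=
  if h : mismatches w ≠ 0 ∧ (allowedFlips w).Nonempty then
    (PMF.uniformOfFinset (allowedFlips w) h.2).map (flip w)
  else
    PMF.pure w

/-- The distribution of the cooling process at time `t`, started from `w`. -/
noncomputable def coolDist (w : Word) : ℕ → PMF Word
  | 0 => PMF.pure w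
  | t + 1 => (coolDist w t).bind coolStep

/-- The expected convergence time `E[T | w₀ = w]` of the cooling process started at `w`,
where `T = min {t ≥ 0 : E(w_t) = 0}`.  Since mismatch-free configurations are absorbing,
`E[T] = ∑_{t ≥ 0} P(T > t) = ∑_{t ≥ 0} P(E(w_t) ≠ 0)`. -/
noncomputable def expConvTime (w : Word) : ℝ≥0∞ :=
  ∑' t : ℕ, (coolDist w t).toOuterMeasure {v | mismatches v ≠ 0}

/-- The factor of `w` starting at position `s` (0-indexed) of length `l`. -/
def factor (w : Word) (s l : ℕ) : Word := (w.drop s).take l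

/-- The height `|p|₁ - |p|₂` of the length-`s` prefix `p` of `w`. -/
def height (w : Word) (s : ℕ) : ℤ :=
  ((w.take s).count true : ℤ) - (w.take s).count false

/-- The occurrence `(s, l)` is a positive Dyck factor of `w`. -/
def IsPosDyckAt (w : Word) (s l : ℕ) : Prop :=
  0 < l ∧ s + l ≤ w.length ∧
  (factor w s l).count true = (factor w s l).count false ∧
  (∀ i ≤ l, ((factor w s l).take i).count false ≤ ((factor w s l).take i).count true) ∧
  0 ≤ height w s

/-- The occurrence `(s, l)` is a negative Dyck factor of `w`. -/
def IsNegDyckAt (w : Word) (s l : ℕ) : Prop :=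
  0 < l ∧ s + l ≤ w.length ∧
  (factor w s l).count true = (factor w s l).count false ∧
  (∀ i ≤ l, ((factor w s l).take i).count true ≤ ((factor w s l).take i).count false) ∧
  height w s ≤ 0

/-- The occurrence `(s, l)` is a Dyck factor of `w` (positive or negative). -/
def IsDyckAt (w : Word) (s l : ℕ) : Prop :=
  IsPosDyckAt w s l ∨ IsNegDyckAt w s l

/-- The occurrence `(s, l)` is a maximal Dyck factor of `w`: no Dyck factor of `w`
with the same height contains it (other than itself). -/
def IsMaxDyckAt (w : Word) (s l : ℕ) : Prop :=
  IsDyckAt w s l ∧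
  ∀ s' l', IsDyckAt w s' l' → height w s' = height w s → s' ≤ s → s + l ≤ s' + l' →
    s' = s ∧ l' = l

/-- The set `DF(w)` of (occurrences of) maximal Dyck factors of `w`,
encoded as pairs (starting position, length). -/
noncomputable def DF (w : Word) : Finset (ℕ × ℕ) :=
  ((Finset.range (w.length + 1)) ×ˢ (Finset.range (w.length + 1))).filter
    (fun sl => IsMaxDyckAt w sl.1 sl.2)

/-- The variant `φ_α(w) = ∑_{v ∈ DF(w)} (1 + |v|₁)^α`. -/
noncomputable def phi (α : ℝ) (w : Word) : ℝ :=
  ∑ sl ∈ DF w, (1 + ((factor w sl.1 sl.2).count true : ℝ)) ^ α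

/-- The volume `V(w) = (1/2) ∑_{k=1}^{|w|} |h_{k-1}(w) + h_k(w)|`: the area between
the broken-line representation of `w` and the horizontal axis. -/
noncomputable def volume (w : Word) : ℝ :=
  (1 / 2) * ∑ k ∈ Finset.range w.length, |((height w k + height w (k + 1) : ℤ) : ℝ)|

/-- The number of pairs of unit cells `x < y` of `[lo, hi)` separated by a point of `C`. -/
noncomputable def sep (lo hi : ℤ) (C : Finset ℤ) : ℕ :=
  ((Finset.Ico lo hi ×ˢ Finset.Ico lo hi).filter fun z : ℤ × ℤ => ∃ c ∈ C, z.1 < c ∧ c ≤ z.2).card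

/-- The first point of `C` after `p`, or `hi` if there is none. -/
noncomputable def nextPt (hi : ℤ) (C : Finset ℤ) (p : ℤ) : ℤ :=
  (insert hi (C.filter (p < ·))).min' (Finset.insert_nonempty _ _)

/-- The last point of `C` before `p`, or `lo` if there is none. -/
noncomputable def prevPt (lo : ℤ) (C : Finset ℤ) (p : ℤ) : ℤ :=
  (insert lo (C.filter (· < p))).max' (Finset.insert_nonempty _ _)

lemma nextPt_mem (hi : ℤ) (C : Finset ℤ) (p : ℤ) :
    nextPt hi C p = hi ∨ (nextPt hi C p ∈ C ∧ p < nextPt hi C p) := by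
  have := Finset.min'_mem (insert hi (C.filter (p < ·))) (Finset.insert_nonempty _ _)
  simpa [nextPt] using this

lemma nextPt_le_hi (hi : ℤ) (C : Finset ℤ) (p : ℤ) : nextPt hi C p ≤ hi :=
  Finset.min'_le _ _ (by simp)

lemma nextPt_le {hi : ℤ} {C : Finset ℤ} {p c : ℤ} (hc : c ∈ C) (h : p < c) :
    nextPt hi C p ≤ c :=
  Finset.min'_le _ _ (by simp [hc, h])

lemma prevPt_mem (lo : ℤ) (C : Finset ℤ) (p : ℤ) :
    prevPt lo C p = lo ∨ (prevPt lo C p ∈ C ∧ prevPt lo C p < p) := by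
  have := Finset.max'_mem (insert lo (C.filter (· < p))) (Finset.insert_nonempty _ _)
  simpa [prevPt] using this

lemma lo_le_prevPt (lo : ℤ) (C : Finset ℤ) (p : ℤ) : lo ≤ prevPt lo C p :=
  Finset.le_max' _ _ (by simp)

lemma le_prevPt {lo : ℤ} {C : Finset ℤ} {p c : ℤ} (hc : c ∈ C) (h : c < p) :
    c ≤ prevPt lo C p :=
  Finset.le_max' _ _ (by simp [hc, h])

/-- Removing a point `p` with neighbours `l < p < r` merges `p - l` cells with `r - p` cells. -/
lemma sep_eq_sep_erase {lo hi l p r : ℤ} {C : Finset ℤ} (hp : p ∈ C) (hlp : l < p) (hpr : p < r)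
    (hl : l = lo ∨ l ∈ C) (hr : r = hi ∨ r ∈ C) (hlo : lo ≤ l) (hhi : r ≤ hi)
    (h : ∀ c ∈ C, l < c → c < r → c = p) :
    (sep lo hi C : ℤ) = sep lo hi (C.erase p) + (p - l) * (r - p) := by
  have key : ((Finset.Ico lo hi ×ˢ Finset.Ico lo hi).filter
        fun z : ℤ × ℤ => ∃ c ∈ C, z.1 < c ∧ c ≤ z.2) =
      ((Finset.Ico lo hi ×ˢ Finset.Ico lo hi).filter
        fun z : ℤ × ℤ => ∃ c ∈ C.erase p, z.1 < c ∧ c ≤ z.2) ∪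
      (Finset.Ico l p ×ˢ Finset.Ico p r) := by
    ext ⟨x, y⟩
    simp only [Finset.mem_filter, Finset.mem_product, Finset.mem_Ico, Finset.mem_union,
      Finset.mem_erase]
    constructor
    · rintro ⟨hxy, c, hc, h1, h2⟩
      by_cases hcp : c = p
      · subst hcp
        by_cases hx : l ≤ x
        · by_cases hy : y < r
          · right; omega
          · left
            refine ⟨hxy, r, ⟨by omega, ?_⟩, by omega, by omega⟩
            rcases hr with hr | hr
            · omega
            · exact hr
        · left
          refine ⟨hxy, l, ⟨by omega, ?_⟩, by omega, by omega⟩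
          rcases hl with hl | hl
          · omega
          · exact hl
      · exact Or.inl ⟨hxy, c, ⟨hcp, hc⟩, h1, h2⟩
    · rintro (⟨hxy, c, hc, h1, h2⟩ | hxy)
      · exact ⟨hxy, c, hc.2, h1, h2⟩
      · exact ⟨by omega, p, hp, by omega, by omega⟩
  have disj : Disjoint ((Finset.Ico lo hi ×ˢ Finset.Ico lo hi).filter
        fun z : ℤ × ℤ => ∃ c ∈ C.erase p, z.1 < c ∧ c ≤ z.2)
      (Finset.Ico l p ×ˢ Finset.Ico p r) := by
    rw [Finset.disjoint_left]
    rintro ⟨x, y⟩ h1 h2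
    simp only [Finset.mem_filter, Finset.mem_product, Finset.mem_Ico, Finset.mem_erase] at h1 h2
    obtain ⟨_, c, hc, h3, h4⟩ := h1
    exact hc.1 (h c hc.2 (by omega) (by omega))
  unfold sep
  rw [key, Finset.card_union_of_disjoint disj, Finset.card_product]
  push_cast
  simp only [Int.card_Ico]
  rw [Int.toNat_of_nonneg (by omega), Int.toNat_of_nonneg (by omega)]

lemma sep_le (lo hi : ℤ) (C : Finset ℤ) (h : lo ≤ hi) : (sep lo hi C : ℤ) ≤ (hi - lo) ^ 2 := by
  have : sep lo hi C ≤ (Finset.Ico lo hi ×ˢ Finset.Ico lo hi).card := Finset.card_filter_le _ _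
  rw [Finset.card_product, Int.card_Ico] at this
  have h2 : ((hi - lo).toNat : ℤ) = hi - lo := Int.toNat_of_nonneg (by omega)
  calc (sep lo hi C : ℤ) ≤ (((hi - lo).toNat * (hi - lo).toNat : ℕ) : ℤ) := by exact_mod_cast this
    _ = (hi - lo) ^ 2 := by push_cast; rw [h2]; ring

/-- Twice the displacement of `p` from the midpoint of its two neighbours, with opposite sign. -/
noncomputable def pull (lo hi : ℤ) (C : Finset ℤ) (p : ℤ) : ℤ :=
  if p ∈ C then nextPt hi C p + prevPt lo C p - 2 * p else 0

section Moves
variable {lo hi j : ℤ} {C C' : Finset ℤ}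

/-- Two points at distance two disappear. -/
lemma sep_annihilate (hC : C ⊆ Finset.Ioo lo hi) (hj : j ∉ C) (h1 : j - 1 ∈ C) (h2 : j + 1 ∈ C)
    (hC' : ∀ i, i ∈ C' ↔ i ∈ C ∧ i ≠ j - 1 ∧ i ≠ j + 1) :
    (sep lo hi C' : ℤ) - sep lo hi C ≤
      2 * (pull lo hi C (j - 1) - pull lo hi C (j + 1)) - 4 := by
  have e : C' = (C.erase (j - 1)).erase (j + 1) := by
    ext i; rw [hC']; simp only [Finset.mem_erase]; tauto
  have b1 := Finset.mem_Ioo.1 (hC h1)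
  have b2 := Finset.mem_Ioo.1 (hC h2)
  have n1 : nextPt hi C (j - 1) = j + 1 := by
    apply le_antisymm (nextPt_le h2 (by omega))
    rcases nextPt_mem hi C (j - 1) with h | ⟨h, h'⟩
    · omega
    · by_contra hlt
      exact hj (by convert h using 1; omega)
  have p2 : prevPt lo C (j + 1) = j - 1 := by
    refine le_antisymm ?_ (le_prevPt h1 (by omega))
    rcases prevPt_mem lo C (j + 1) with h | ⟨h, h'⟩
    · omega
    · by_contra hlt
      exact hj (by convert h using 1; omega)
  have ml := prevPt_mem lo C (j - 1)
  have mr := nextPt_mem hi C (j + 1)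
  have ll := lo_le_prevPt lo C (j - 1)
  have rr := nextPt_le_hi hi C (j + 1)
  have fl : ∀ c ∈ C, c < j - 1 → c ≤ prevPt lo C (j - 1) := fun c hc => le_prevPt hc
  have fr : ∀ c ∈ C, j + 1 < c → nextPt hi C (j + 1) ≤ c := fun c hc => nextPt_le hc
  simp only [pull, h1, h2, if_true, n1, p2]
  generalize prevPt lo C (j - 1) = l at *
  generalize nextPt hi C (j + 1) = r at *
  have hl : l < j - 1 := by rcases ml with h | h <;> omega
  have hr : j + 1 < r := by rcases mr with h | h <;> omega
  have s1 := sep_eq_sep_erase (lo := lo) (hi := hi) (l := l) (r := j + 1) h1 hl (by omega)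
    (by tauto) (Or.inr h2) ll (by omega) (by
      intro c hc c1 c2
      by_contra hne
      rcases lt_or_gt_of_ne hne with h | h
      · have := fl c hc h; omega
      · exact hj (by convert hc using 1; omega))
  have s2 := sep_eq_sep_erase (lo := lo) (hi := hi) (l := l) (p := j + 1) (r := r)
    (C := C.erase (j - 1))
    (by simp [h2]; omega) (by omega) (by omega)
    (by rcases ml with h | h
        · exact Or.inl h
        · exact Or.inr (by simp [h.1]; omega))
    (by rcases mr with h | h
        · exact Or.inl h
        · exact Or.inr (by simp [h.1]; omega)) ll rr (by
      intro c hc c1 c2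
      simp only [Finset.mem_erase] at hc
      by_contra hne
      by_cases h : c < j - 1
      · have := fl c hc.2 h; omega
      · by_cases h' : j + 1 < c
        · have := fr c hc.2 h'; omega
        · exact hj (by convert hc.2 using 1; omega))
  rw [e]
  nlinarith [mul_nonneg (sub_nonneg.2 hl.le) (sub_nonneg.2 hr.le)]

/-- A point moves two units to the right. -/
lemma sep_move_right (hC : C ⊆ Finset.Ioo lo hi) (hj : j ∉ C) (h1 : j - 1 ∈ C) (h2 : j + 1 ∉ C)
    (hhi : j + 1 < hi) (hC' : ∀ i, i ∈ C' ↔ (i ∈ C ∧ i ≠ j - 1) ∨ i = j + 1) :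
    (sep lo hi C' : ℤ) - sep lo hi C ≤
      2 * (pull lo hi C (j - 1) - pull lo hi C (j + 1)) - 4 := by
  have e : C'.erase (j + 1) = C.erase (j - 1) := by
    ext i; simp only [Finset.mem_erase, hC']
    constructor
    · tauto
    · rintro ⟨h, h'⟩
      exact ⟨fun hh => h2 (hh ▸ h'), Or.inl ⟨h', h⟩⟩
  have b1 := Finset.mem_Ioo.1 (hC h1)
  have ml := prevPt_mem lo C (j - 1)
  have mr := nextPt_mem hi C (j - 1)
  have ll := lo_le_prevPt lo C (j - 1)
  have rr := nextPt_le_hi hi C (j - 1)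
  have fl : ∀ c ∈ C, c < j - 1 → c ≤ prevPt lo C (j - 1) := fun c hc => le_prevPt hc
  have fr : ∀ c ∈ C, j - 1 < c → nextPt hi C (j - 1) ≤ c := fun c hc => nextPt_le hc
  simp only [pull, h1, h2, if_true, if_false]
  generalize prevPt lo C (j - 1) = l at *
  generalize nextPt hi C (j - 1) = r at *
  have hl : l < j - 1 := by rcases ml with h | h <;> omega
  have hr : j + 1 < r := by
    rcases mr with h | h
    · omega
    · by_contra hlt
      have : r = j ∨ r = j + 1 := by omega
      rcases this with rfl | rfl
      · exact hj h.1
      · exact h2 h.1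
  have s1 := sep_eq_sep_erase (lo := lo) (hi := hi) (l := l) (r := r) h1 hl (by omega)
    (by tauto) (by tauto) ll (by omega) (by
      intro c hc c1 c2
      by_contra hne
      rcases lt_or_gt_of_ne hne with h | h
      · have := fl c hc h; omega
      · have := fr c hc h; omega)
  have s2 := sep_eq_sep_erase (lo := lo) (hi := hi) (l := l) (p := j + 1) (r := r) (C := C')
    (by rw [hC']; simp) (by omega) (by omega)
    (by rcases ml with h | h
        · exact Or.inl h
        · exact Or.inr (by rw [hC']; exact Or.inl ⟨h.1, by omega⟩))
    (by rcases mr with h | h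
        · exact Or.inl h
        · exact Or.inr (by rw [hC']; exact Or.inl ⟨h.1, by omega⟩)) ll rr (by
      intro c hc c1 c2
      rw [hC'] at hc
      rcases hc with hc | hc
      · rcases lt_or_gt_of_ne hc.2 with h | h
        · have := fl c hc.1 h; omega
        · have := fr c hc.1 h; omega
      · exact hc)
  rw [e] at s2
  nlinarith

/-- A point moves two units to the left. -/
lemma sep_move_left (hC : C ⊆ Finset.Ioo lo hi) (hj : j ∉ C) (h1 : j - 1 ∉ C) (h2 : j + 1 ∈ C)
    (hlo : lo < j - 1) (hC' : ∀ i, i ∈ C' ↔ (i ∈ C ∧ i ≠ j + 1) ∨ i = j - 1) :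
    (sep lo hi C' : ℤ) - sep lo hi C ≤
      2 * (pull lo hi C (j - 1) - pull lo hi C (j + 1)) - 4 := by
  have e : C'.erase (j - 1) = C.erase (j + 1) := by
    ext i; simp only [Finset.mem_erase, hC']
    constructor
    · tauto
    · rintro ⟨h, h'⟩
      exact ⟨fun hh => h1 (hh ▸ h'), Or.inl ⟨h', h⟩⟩
  have b1 := Finset.mem_Ioo.1 (hC h2)
  have ml := prevPt_mem lo C (j + 1)
  have mr := nextPt_mem hi C (j + 1)
  have ll := lo_le_prevPt lo C (j + 1)
  have rr := nextPt_le_hi hi C (j + 1)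
  have fl : ∀ c ∈ C, c < j + 1 → c ≤ prevPt lo C (j + 1) := fun c hc => le_prevPt hc
  have fr : ∀ c ∈ C, j + 1 < c → nextPt hi C (j + 1) ≤ c := fun c hc => nextPt_le hc
  simp only [pull, h1, h2, if_true, if_false]
  generalize prevPt lo C (j + 1) = l at *
  generalize nextPt hi C (j + 1) = r at *
  have hr : j + 1 < r := by rcases mr with h | h <;> omega
  have hl : l < j - 1 := by
    rcases ml with h | h
    · omega
    · by_contra hlt
      have : l = j ∨ l = j - 1 := by omega
      rcases this with rfl | rfl
      · exact hj h.1
      · exact h1 h.1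
  have s1 := sep_eq_sep_erase (lo := lo) (hi := hi) (l := l) (r := r) h2 (by omega) hr
    (by tauto) (by tauto) ll (by omega) (by
      intro c hc c1 c2
      by_contra hne
      rcases lt_or_gt_of_ne hne with h | h
      · have := fl c hc h; omega
      · have := fr c hc h; omega)
  have s2 := sep_eq_sep_erase (lo := lo) (hi := hi) (l := l) (p := j - 1) (r := r) (C := C')
    (by rw [hC']; simp) (by omega) (by omega)
    (by rcases ml with h | h
        · exact Or.inl h
        · exact Or.inr (by rw [hC']; exact Or.inl ⟨h.1, by omega⟩))
    (by rcases mr with h | h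
        · exact Or.inl h
        · exact Or.inr (by rw [hC']; exact Or.inl ⟨h.1, by omega⟩)) ll rr (by
      intro c hc c1 c2
      rw [hC'] at hc
      rcases hc with hc | hc
      · rcases lt_or_gt_of_ne hc.2 with h | h
        · have := fl c hc.1 h; omega
        · have := fr c hc.1 h; omega
      · exact hc)
  rw [e] at s2
  nlinarith

/-- A point exits through the right end. -/
lemma sep_exit_right (hC : C ⊆ Finset.Ioo lo hi) (hj : j ∉ C) (h1 : j - 1 ∈ C)
    (hhi : j + 1 = hi) (hC' : ∀ i, i ∈ C' ↔ i ∈ C ∧ i ≠ j - 1) :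
    (sep lo hi C' : ℤ) - sep lo hi C ≤
      2 * (pull lo hi C (j - 1) - pull lo hi C (j + 1)) - 4 := by
  have e : C' = C.erase (j - 1) := by
    ext i; rw [hC']; simp only [Finset.mem_erase]; tauto
  have h2 : j + 1 ∉ C := fun h => by have := Finset.mem_Ioo.1 (hC h); omega
  have b1 := Finset.mem_Ioo.1 (hC h1)
  have fr : ∀ c ∈ C, j - 1 < c → hi ≤ c := by
    intro c hc h
    have := Finset.mem_Ioo.1 (hC hc)
    by_contra hlt
    exact hj (by convert hc using 1; omega)
  have hn : nextPt hi C (j - 1) = hi := by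
    rcases nextPt_mem hi C (j - 1) with h | h
    · exact h
    · exact le_antisymm (nextPt_le_hi _ _ _) (fr _ h.1 h.2)
  have ml := prevPt_mem lo C (j - 1)
  have ll := lo_le_prevPt lo C (j - 1)
  have fl : ∀ c ∈ C, c < j - 1 → c ≤ prevPt lo C (j - 1) := fun c hc => le_prevPt hc
  simp only [pull, h1, h2, if_true, if_false, hn]
  generalize prevPt lo C (j - 1) = l at *
  have hl : l < j - 1 := by rcases ml with h | h <;> omega
  have s1 := sep_eq_sep_erase (lo := lo) (hi := hi) (l := l) (r := hi) h1 hl (by omega)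
    (by tauto) (Or.inl rfl) ll le_rfl (by
      intro c hc c1 c2
      by_contra hne
      rcases lt_or_gt_of_ne hne with h | h
      · have := fl c hc h; omega
      · have := fr c hc h; omega)
  rw [e]
  subst hhi
  nlinarith

/-- A point exits through the left end. -/
lemma sep_exit_left (hC : C ⊆ Finset.Ioo lo hi) (hj : j ∉ C) (h2 : j + 1 ∈ C)
    (hlo : j - 1 = lo) (hC' : ∀ i, i ∈ C' ↔ i ∈ C ∧ i ≠ j + 1) :
    (sep lo hi C' : ℤ) - sep lo hi C ≤
      2 * (pull lo hi C (j - 1) - pull lo hi C (j + 1)) - 4 := by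
  have e : C' = C.erase (j + 1) := by
    ext i; rw [hC']; simp only [Finset.mem_erase]; tauto
  have h1 : j - 1 ∉ C := fun h => by have := Finset.mem_Ioo.1 (hC h); omega
  have b1 := Finset.mem_Ioo.1 (hC h2)
  have fl : ∀ c ∈ C, c < j + 1 → c ≤ lo := by
    intro c hc h
    have := Finset.mem_Ioo.1 (hC hc)
    by_contra hlt
    exact hj (by convert hc using 1; omega)
  have hn : prevPt lo C (j + 1) = lo := by
    rcases prevPt_mem lo C (j + 1) with h | h
    · exact h
    · exact le_antisymm (fl _ h.1 h.2) (lo_le_prevPt _ _ _)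
  have mr := nextPt_mem hi C (j + 1)
  have rr := nextPt_le_hi hi C (j + 1)
  have fr : ∀ c ∈ C, j + 1 < c → nextPt hi C (j + 1) ≤ c := fun c hc => nextPt_le hc
  simp only [pull, h1, h2, if_true, if_false, hn]
  generalize nextPt hi C (j + 1) = r at *
  have hr : j + 1 < r := by rcases mr with h | h <;> omega
  have s1 := sep_eq_sep_erase (lo := lo) (hi := hi) (l := lo) (r := r) h2 (by omega) hr
    (Or.inl rfl) (by tauto) le_rfl rr (by
      intro c hc c1 c2
      by_contra hne
      rcases lt_or_gt_of_ne hne with h | h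
      · have := fl c hc h; omega
      · have := fr c hc h; omega)
  rw [e]
  subst hlo
  nlinarith

end Moves

/-- A path with unit steps, from height `0` at time `0` to height `0` at time `N`. -/
structure IsPath (N : ℤ) (h : ℤ → ℤ) : Prop where
  start : h 0 = 0
  finish : h N = 0
  step : ∀ k, 0 ≤ k → k < N → h (k + 1) = h k + 1 ∨ h (k + 1) = h k - 1

/-- The interior times at which the path goes straight. -/
noncomputable def straight (N : ℤ) (h : ℤ → ℤ) : Finset ℤ :=
  (Finset.Ioo 0 N).filter fun i => h (i - 1) ≠ h (i + 1)

/-- The times at which the path crosses the level `H`. -/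
noncomputable def crossings (N : ℤ) (h : ℤ → ℤ) (H : ℤ) : Finset ℤ :=
  (straight N h).filter fun i => h i = H

/-- Left end of the window attached to level `H`. -/
def lowEnd (N H : ℤ) : ℤ := if H = 0 then 0 else -N

/-- Right end of the window attached to level `H`. -/
def highEnd (N H : ℤ) : ℤ := if H = 0 then N else 2 * N

/-- The potential of a path. -/
noncomputable def potential (N : ℤ) (h : ℤ → ℤ) : ℕ :=
  ∑ H ∈ Finset.Icc (-N) N, sep (lowEnd N H) (highEnd N H) (crossings N h H)

/-- The pull exerted on time `i` at its own level. -/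
noncomputable def force (N : ℤ) (h : ℤ → ℤ) (i : ℤ) : ℤ :=
  pull (lowEnd N (h i)) (highEnd N (h i)) (crossings N h (h i)) i

/-- The path obtained by reflecting the height at time `j`. -/
noncomputable def reflectAt (h : ℤ → ℤ) (j : ℤ) : ℤ → ℤ :=
  Function.update h j (2 * h (j - 1) - h j)

section Path
variable {N : ℤ} {h : ℤ → ℤ}

lemma mem_straight {i : ℤ} : i ∈ straight N h ↔ (0 < i ∧ i < N) ∧ h (i - 1) ≠ h (i + 1) := by
  simp [straight]

lemma mem_crossings {i H : ℤ} :
    i ∈ crossings N h H ↔ ((0 < i ∧ i < N) ∧ h (i - 1) ≠ h (i + 1)) ∧ h i = H := by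
  simp [crossings, mem_straight]

lemma IsPath.neg (hp : IsPath N h) : IsPath N (fun i => -h i) where
  start := by simp [hp.start]
  finish := by simp [hp.finish]
  step k h0 h1 := by have := hp.step k h0 h1; omega

lemma IsPath.step' (hp : IsPath N h) {k : ℤ} (h0 : 0 < k) (h1 : k ≤ N) :
    h k = h (k - 1) + 1 ∨ h k = h (k - 1) - 1 := by
  have := hp.step (k - 1) (by omega) (by omega)
  rwa [sub_add_cancel] at this

lemma IsPath.abs_height_le (hp : IsPath N h) {k : ℤ} (h0 : 0 ≤ k) (h1 : k ≤ N) : |h k| ≤ k := by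
  induction k, h0 using Int.leInduction with
  | base => simp [hp.start]
  | succ k hk ih =>
    have := ih (by omega)
    have := hp.step k hk (by omega)
    simp only [abs_le] at *
    omega

lemma lowEnd_nonpos (hN : 0 ≤ N) (H : ℤ) : lowEnd N H ≤ 0 := by
  unfold lowEnd; split_ifs <;> omega

lemma le_highEnd (hN : 0 ≤ N) (H : ℤ) : N ≤ highEnd N H := by
  unfold highEnd; split_ifs <;> omega

lemma crossings_subset (hN : 0 ≤ N) (H : ℤ) :
    crossings N h H ⊆ Finset.Ioo (lowEnd N H) (highEnd N H) := by
  intro i hi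
  have := mem_crossings.1 hi
  have := lowEnd_nonpos hN H
  have := le_highEnd hN H
  rw [Finset.mem_Ioo]; omega

lemma IsPath.exists_crossing_up (hp : IsPath N h) {k m : ℤ} (h0 : 0 ≤ k) (hm : m ≤ N)
    (hkm : k < m) (e : h m = h k + 2) : ∃ c ∈ crossings N h (h k + 1), k < c ∧ c < m := by
  have aux : ∀ m, k ≤ m → m ≤ N → (h m ≤ h k + 1 ∧ (k < m → h (m - 1) ≤ h k + 1)) ∨
      ∃ c ∈ crossings N h (h k + 1), k < c ∧ c < m := by
    intro m hkm
    induction m, hkm using Int.leInduction with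
    | base => intro; left; omega
    | succ m hkm ih =>
      intro hmN
      rcases ih (by omega) with ⟨h1, h2⟩ | ⟨c, hc, h1, h2⟩
      · have st := hp.step m (by omega) (by omega)
        by_cases h3 : h (m + 1) ≤ h k + 1
        · exact Or.inl ⟨h3, by simp [h1]⟩
        · have hkm' : k < m := by
            rcases eq_or_lt_of_le hkm with rfl | h
            · omega
            · exact h
          have st' := hp.step' (k := m) (by omega) (by omega)
          have := h2 hkm'
          exact Or.inr ⟨m, mem_crossings.2 ⟨⟨by omega, by omega⟩, by omega⟩, hkm', by omega⟩
      · exact Or.inr ⟨c, hc, h1, by omega⟩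
  rcases aux m hkm.le hm with h1 | h1
  · omega
  · exact h1

lemma crossings_neg (H : ℤ) : crossings N (fun i => -h i) H = crossings N h (-H) := by
  ext i
  simp only [mem_crossings, ne_eq, neg_inj]
  refine and_congr_right fun _ => ?_
  omega

/-- A path whose height changes by two between times `k` and `m` crosses the level between. -/
lemma IsPath.exists_crossing (hp : IsPath N h) {k m s : ℤ} (hs : s = 1 ∨ s = -1) (h0 : 0 ≤ k)
    (hm : m ≤ N) (hkm : k < m) (e : h m = h k + 2 * s) :
    ∃ c ∈ crossings N h (h k + s), k < c ∧ c < m := by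
  rcases hs with rfl | rfl
  · exact hp.exists_crossing_up h0 hm hkm (by omega)
  · have := hp.neg.exists_crossing_up h0 hm hkm (by omega)
    rw [crossings_neg] at this
    convert this using 5
    ring

lemma lowEnd_of_ne {H : ℤ} (hH : H ≠ 0) : lowEnd N H = -N := if_neg hH

lemma highEnd_of_ne {H : ℤ} (hH : H ≠ 0) : highEnd N H = 2 * N := if_neg hH

lemma highEnd_le (hN : 0 ≤ N) (H : ℤ) : highEnd N H ≤ 2 * N := by
  unfold highEnd; split_ifs <;> omega

lemma le_lowEnd (hN : 0 ≤ N) (H : ℤ) : -N ≤ lowEnd N H := by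
  unfold lowEnd; split_ifs <;> omega

/-- Along a straight stretch, the force decreases. -/
lemma IsPath.force_succ_le (hp : IsPath N h) {i : ℤ} (h1 : i ∈ straight N h)
    (h2 : i + 1 ∈ straight N h) : force N h (i + 1) ≤ force N h i := by
  rw [mem_straight] at h1 h2
  have hN : 0 ≤ N := by omega
  have m1 : i ∈ crossings N h (h i) := mem_crossings.2 ⟨h1, rfl⟩
  have m2 : i + 1 ∈ crossings N h (h (i + 1)) := mem_crossings.2 ⟨h2, rfl⟩
  obtain ⟨s, hs, e0, e1, e2⟩ : ∃ s : ℤ, (s = 1 ∨ s = -1) ∧ h (i - 1) = h i - s ∧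
      h (i + 1) = h i + s ∧ h (i + 2) = h i + 2 * s := by
    have a := hp.step' (k := i) (by omega) (by omega)
    have b := hp.step i (by omega) (by omega)
    have c := hp.step (i + 1) (by omega) (by omega)
    rw [add_sub_cancel_right, add_assoc] at h2
    rw [add_assoc] at c
    norm_num at h2 c
    exact ⟨h (i + 1) - h i, by omega, by omega, by omega, by omega⟩
  simp only [force, pull, m1, m2, if_true]
  have hnext : nextPt (highEnd N (h (i + 1))) (crossings N h (h (i + 1))) (i + 1) ≤
      nextPt (highEnd N (h i)) (crossings N h (h i)) i := by
    have main : ∀ r, i < r → r ≤ N → h r = h i →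
        nextPt (highEnd N (h (i + 1))) (crossings N h (h (i + 1))) (i + 1) ≤ r := by
      intro r hr hrN e
      have : r ≠ i + 1 := by rintro rfl; omega
      have : r ≠ i + 2 := by rintro rfl; omega
      obtain ⟨c, hc, c1, c2⟩ := hp.exists_crossing (k := i + 2) (m := r) (s := -s) (by omega)
        (by omega) hrN (by omega) (by omega)
      rw [show h (i + 2) + -s = h (i + 1) by omega] at hc
      exact (nextPt_le hc (by omega)).trans c2.le
    rcases nextPt_mem (highEnd N (h i)) (crossings N h (h i)) i with e | ⟨e, e'⟩
    · rw [e]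
      by_cases hz : h i = 0
      · rw [hz, show highEnd N 0 = N from if_pos rfl]
        exact main N (by omega) le_rfl (by rw [hp.finish, hz])
      · rw [highEnd_of_ne hz]
        exact (nextPt_le_hi _ _ _).trans (highEnd_le hN _)
    · have := mem_crossings.1 e
      exact main _ e' (by omega) this.2
  have hprev : prevPt (lowEnd N (h (i + 1))) (crossings N h (h (i + 1))) (i + 1) ≤
      prevPt (lowEnd N (h i)) (crossings N h (h i)) i := by
    have main : ∀ l, l < i + 1 → 0 ≤ l → h l = h (i + 1) →
        l ≤ prevPt (lowEnd N (h i)) (crossings N h (h i)) i := by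
      intro l hl hl0 e
      have : l ≠ i := by rintro rfl; omega
      have : l ≠ i - 1 := by rintro rfl; omega
      obtain ⟨c, hc, c1, c2⟩ := hp.exists_crossing (k := l) (m := i - 1) (s := -s) (by omega)
        (by omega) (by omega) (by omega) (by omega)
      rw [show h l + -s = h i by omega] at hc
      exact c1.le.trans (le_prevPt hc (by omega))
    rcases prevPt_mem (lowEnd N (h (i + 1))) (crossings N h (h (i + 1))) (i + 1) with e | ⟨e, e'⟩
    · rw [e]
      by_cases hz : h (i + 1) = 0
      · rw [hz, show lowEnd N 0 = 0 from if_pos rfl]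
        exact main 0 (by omega) le_rfl (by rw [hp.start, hz])
      · rw [lowEnd_of_ne hz]
        exact (le_lowEnd hN _).trans (lo_le_prevPt _ _ _)
    · have := mem_crossings.1 e
      exact main _ e' (by omega) this.2
  omega

lemma force_eq_zero {i : ℤ} (hi : i ∉ straight N h) : force N h i = 0 := by
  rw [force, pull, if_neg]
  exact fun hm => hi (Finset.mem_of_mem_filter _ hm)

lemma IsPath.force_one_nonpos (hp : IsPath N h) : force N h 1 ≤ 0 := by
  by_cases h1 : (1 : ℤ) ∈ straight N h
  · have h1' := mem_straight.1 h1
    have st := hp.step 0 le_rfl (by omega)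
    have st' := hp.step 1 (by omega) (by omega)
    norm_num [hp.start] at h1' st st'
    have hz : h 1 ≠ 0 := by omega
    have m1 : (1 : ℤ) ∈ crossings N h (h 1) := mem_crossings.2 ⟨mem_straight.1 h1, rfl⟩
    obtain ⟨c, hc, c1, c2⟩ := hp.exists_crossing (k := 2) (m := N) (s := -h 1) (by omega)
      (by omega) le_rfl (by
        rcases lt_or_eq_of_le (show 2 ≤ N by omega) with h | h
        · exact h
        · have := hp.finish
          rw [← h] at this
          omega) (by rw [hp.finish]; omega)
    rw [show h 2 + -h 1 = h 1 by omega] at hc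
    have hn := nextPt_le (hi := highEnd N (h 1)) hc (show 1 < c by omega)
    simp only [force, pull, m1, if_true]
    rcases prevPt_mem (lowEnd N (h 1)) (crossings N h (h 1)) 1 with e | ⟨e, e'⟩
    · rw [lowEnd_of_ne hz] at *
      omega
    · have := mem_crossings.1 e
      omega
  · rw [force_eq_zero h1]

lemma IsPath.force_last_nonneg (hp : IsPath N h) : 0 ≤ force N h (N - 1) := by
  by_cases h1 : (N - 1 : ℤ) ∈ straight N h
  · have h1' := mem_straight.1 h1
    have st := hp.step' (k := N) (by omega) le_rfl
    have st' := hp.step' (k := N - 1) (by omega) (by omega)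
    rw [sub_add_cancel, hp.finish] at h1'
    rw [hp.finish] at st
    have hz : h (N - 1) ≠ 0 := by omega
    have m1 : N - 1 ∈ crossings N h (h (N - 1)) := mem_crossings.2 ⟨mem_straight.1 h1, rfl⟩
    obtain ⟨c, hc, c1, c2⟩ := hp.exists_crossing (k := 0) (m := N - 1 - 1) (s := h (N - 1))
      (by omega) (by omega) (by omega) (by
        rcases lt_or_eq_of_le (show 0 ≤ N - 1 - 1 by omega) with h | h
        · exact h
        · have := hp.start
          rw [← h] at h1'
          omega) (by rw [hp.start]; omega)
    rw [hp.start, zero_add] at hc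
    have hn := le_prevPt (lo := lowEnd N (h (N - 1))) hc (show c < N - 1 by omega)
    simp only [force, pull, m1, if_true]
    rcases nextPt_mem (highEnd N (h (N - 1))) (crossings N h (h (N - 1))) (N - 1) with e | ⟨e, e'⟩
    · rw [highEnd_of_ne hz] at *
      omega
    · have := mem_crossings.1 e
      omega
  · rw [force_eq_zero h1]

lemma mem_straight_reflectAt (hp : IsPath N h) {j i : ℤ} (hj : 0 < j ∧ j < N)
    (e : h (j - 1) = h (j + 1)) :
    i ∈ straight N (reflectAt h j) ↔
      if i = j - 1 ∨ i = j + 1 then (0 < i ∧ i < N) ∧ i ∉ straight N h else i ∈ straight N h := by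
  have a := hp.step' (k := j) (by omega) (by omega)
  simp only [mem_straight, reflectAt]
  split_ifs with hi
  · rcases hi with rfl | rfl
    · have := fun h : 0 < j - 1 => hp.step' (k := j - 1) (by omega) (by omega)
      rw [Function.update_of_ne (by omega), sub_add_cancel, Function.update_self]
      omega
    · have := fun h : j + 1 < N => hp.step (j + 1) (by omega) (by omega)
      rw [add_sub_cancel_right, Function.update_self, Function.update_of_ne (by omega)]
      omega
  · rw [Function.update_of_ne (by omega), Function.update_of_ne (by omega)]

lemma crossings_reflectAt_of_ne (hp : IsPath N h) {j H : ℤ} (hj : 0 < j ∧ j < N)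
    (e : h (j - 1) = h (j + 1)) (hH : H ≠ h (j - 1)) :
    crossings N (reflectAt h j) H = crossings N h H := by
  ext i
  simp only [crossings, Finset.mem_filter, mem_straight_reflectAt hp hj e]
  by_cases hij : i = j
  · subst hij
    rw [if_neg (by omega)]
    simp only [mem_straight]
    tauto
  · rw [reflectAt, Function.update_of_ne hij]
    split_ifs with hi
    · rcases hi with rfl | rfl
      · exact ⟨fun h => absurd h.2.symm hH, fun h => absurd h.2.symm hH⟩
      · rw [← e]
        exact ⟨fun h => absurd h.2.symm hH, fun h => absurd h.2.symm hH⟩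
    · rfl

lemma mem_crossings_reflectAt (hp : IsPath N h) {j i : ℤ} (hj : 0 < j ∧ j < N)
    (e : h (j - 1) = h (j + 1)) :
    i ∈ crossings N (reflectAt h j) (h (j - 1)) ↔
      if i = j - 1 ∨ i = j + 1 then (0 < i ∧ i < N) ∧ i ∉ crossings N h (h (j - 1))
      else i ∈ crossings N h (h (j - 1)) := by
  simp only [crossings, Finset.mem_filter, mem_straight_reflectAt hp hj e]
  by_cases hij : i = j
  · subst hij
    rw [if_neg (by omega), if_neg (by omega)]
    simp only [mem_straight]
    tauto
  · rw [reflectAt, Function.update_of_ne hij]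
    split_ifs with hi
    · rcases hi with rfl | rfl
      · simp
      · simp [e]
    · rfl

lemma IsPath.sep_reflectAt (hp : IsPath N h) {j : ℤ} (hj : 0 < j ∧ j < N)
    (e : h (j - 1) = h (j + 1)) (ha : j - 1 ∈ straight N h ∨ j + 1 ∈ straight N h) :
    (sep (lowEnd N (h (j - 1))) (highEnd N (h (j - 1)))
      (crossings N (reflectAt h j) (h (j - 1))) : ℤ) -
      sep (lowEnd N (h (j - 1))) (highEnd N (h (j - 1))) (crossings N h (h (j - 1))) ≤
      2 * (force N h (j - 1) - force N h (j + 1)) - 4 := by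
  have hN : 0 ≤ N := by omega
  have hC := fun i => mem_crossings_reflectAt (i := i) hp hj e
  have hs := crossings_subset (h := h) hN (h (j - 1))
  have l0 := lowEnd_nonpos hN (h (j - 1))
  have r0 := le_highEnd hN (h (j - 1))
  have hjC : j ∉ crossings N h (h (j - 1)) := by
    intro hm
    exact (mem_crossings.1 hm).1.2 e
  have c1 : j - 1 ∈ straight N h ↔ j - 1 ∈ crossings N h (h (j - 1)) := by
    simp [crossings]
  have c2 : j + 1 ∈ straight N h ↔ j + 1 ∈ crossings N h (h (j - 1)) := by
    simp [crossings, e]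
  rw [c1, c2] at ha
  simp only [force, ← e]
  by_cases h1 : j - 1 ∈ crossings N h (h (j - 1))
  · by_cases h2 : j + 1 ∈ crossings N h (h (j - 1))
    · refine sep_annihilate hs hjC h1 h2 fun i => ?_
      rw [hC]
      split_ifs with hi
      · rcases hi with rfl | rfl <;> simp [h1, h2]
      · tauto
    · rcases lt_or_eq_of_le (show j + 1 ≤ N by omega) with hlt | heq
      · refine sep_move_right hs hjC h1 h2 (by omega) fun i => ?_
        rw [hC]
        split_ifs with hi
        · rcases hi with rfl | rfl
          · simp [h1]; omega
          · simp [h2]; omega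
        · tauto
      · refine sep_exit_right hs hjC h1 ?_ fun i => ?_
        · rw [e, heq, hp.finish, highEnd, if_pos rfl]
        · rw [hC]
          split_ifs with hi
          · rcases hi with rfl | rfl
            · simp [h1]
            · simp [h2]; omega
          · tauto
  · have h2 := ha.resolve_left h1
    rcases lt_or_eq_of_le (show 0 ≤ j - 1 by omega) with hlt | heq
    · refine sep_move_left hs hjC h1 h2 (by omega) fun i => ?_
      rw [hC]
      split_ifs with hi
      · rcases hi with rfl | rfl
        · simp [h1]; omega
        · simp [h2]; omega
      · tauto
    · refine sep_exit_left hs hjC h2 ?_ fun i => ?_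
      · rw [← heq, hp.start, lowEnd, if_pos rfl]
      · rw [hC]
        split_ifs with hi
        · rcases hi with rfl | rfl
          · simp [h1]; omega
          · simp [h2]
        · tauto

lemma IsPath.potential_reflectAt (hp : IsPath N h) {j : ℤ} (hj : 0 < j ∧ j < N)
    (e : h (j - 1) = h (j + 1)) (ha : j - 1 ∈ straight N h ∨ j + 1 ∈ straight N h) :
    (potential N (reflectAt h j) : ℤ) - potential N h ≤
      2 * (force N h (j - 1) - force N h (j + 1)) - 4 := by
  have hmem : h (j - 1) ∈ Finset.Icc (-N) N := by
    have := hp.abs_height_le (k := j - 1) (by omega) (by omega)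
    rw [abs_le] at this
    rw [Finset.mem_Icc]; omega
  unfold potential
  push_cast
  rw [← Finset.sum_sub_distrib, Finset.sum_eq_single_of_mem _ hmem]
  · exact hp.sep_reflectAt hj e ha
  · intro H _ hH
    rw [crossings_reflectAt_of_ne hp hj e hH, sub_self]

lemma potential_le (hN : 0 ≤ N) : (potential N h : ℤ) ≤ (2 * N + 1) * (9 * N ^ 2) := by
  unfold potential
  push_cast
  calc _ ≤ ∑ H ∈ Finset.Icc (-N) N, 9 * N ^ 2 := by
        refine Finset.sum_le_sum fun H _ => ?_
        have a := le_lowEnd hN H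
        have b := highEnd_le hN H
        have c := lowEnd_nonpos hN H
        have d := le_highEnd hN H
        refine (sep_le _ _ _ (by omega)).trans ?_
        have : highEnd N H - lowEnd N H ≤ 3 * N := by omega
        calc _ ≤ (3 * N) ^ 2 := by gcongr; omega
          _ = 9 * N ^ 2 := by ring
    _ = (2 * N + 1) * (9 * N ^ 2) := by
        rw [Finset.sum_const, Int.card_Icc, nsmul_eq_mul, Int.toNat_of_nonneg (by omega)]
        ring

/-- The local extrema whose reflection does not increase the number of straight times. -/
noncomputable def movable (N : ℤ) (h : ℤ → ℤ) : Finset ℤ :=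
  (Finset.Ioo 0 N).filter fun j =>
    h (j - 1) = h (j + 1) ∧ (j - 1 ∈ straight N h ∨ j + 1 ∈ straight N h)

lemma sum_Ioo_telescope (g : ℤ → ℤ) (hN : 1 ≤ N) :
    ∑ j ∈ Finset.Ioo 0 N, (g (j - 1) - g (j + 1)) = g 0 + g 1 - g (N - 1) - g N := by
  induction N, hN using Int.leInduction with
  | base => simp [show Finset.Ioo (0 : ℤ) 1 = ∅ from rfl]
  | succ N hN ih =>
    have : Finset.Ioo 0 (N + 1) = insert N (Finset.Ioo 0 N) := by
      ext; simp; omega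
    rw [this, Finset.sum_insert (by simp), ih]
    ring_nf

lemma IsPath.sum_force_le (hp : IsPath N h) (hN : 1 ≤ N) :
    ∑ j ∈ movable N h, (force N h (j - 1) - force N h (j + 1)) ≤ 0 := by
  have tel := sum_Ioo_telescope (force N h) hN
  have f0 : force N h 0 = 0 := force_eq_zero (by simp [mem_straight])
  have fN : force N h N = 0 := force_eq_zero (by simp [mem_straight])
  have f1 := hp.force_one_nonpos
  have fl := hp.force_last_nonneg
  have split := Finset.sum_filter_add_sum_filter_not (Finset.Ioo 0 N) (fun j => j ∈ straight N h)
    (fun j => force N h (j - 1) - force N h (j + 1))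
  have e1 : ∑ j ∈ (Finset.Ioo 0 N).filter (fun j => ¬ j ∈ straight N h),
      (force N h (j - 1) - force N h (j + 1)) =
      ∑ j ∈ movable N h, (force N h (j - 1) - force N h (j + 1)) := by
    symm
    apply Finset.sum_subset
    · intro j hj
      simp only [movable, Finset.mem_filter, mem_straight, Finset.mem_Ioo] at hj ⊢
      tauto
    · intro j hj hj'
      have hj2 : ¬(j - 1 ∈ straight N h ∨ j + 1 ∈ straight N h) := by
        intro hc
        apply hj'
        simp only [movable, Finset.mem_filter, Finset.mem_Ioo] at hj ⊢
        refine ⟨hj.1, ?_, hc⟩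
        by_contra hne
        exact hj.2 (mem_straight.2 ⟨hj.1, hne⟩)
      push Not at hj2
      rw [force_eq_zero hj2.1, force_eq_zero hj2.2, sub_zero]
  have e2 : 0 ≤ ∑ j ∈ (Finset.Ioo 0 N).filter (fun j => j ∈ straight N h),
      (force N h (j - 1) - force N h (j + 1)) := by
    have hS : (Finset.Ioo 0 N).filter (fun j => j ∈ straight N h) = straight N h := by
      ext i; simp only [Finset.mem_filter, Finset.mem_Ioo, mem_straight]; tauto
    rw [hS, Finset.sum_sub_distrib]
    have a1 : ∑ j ∈ straight N h, force N h (j - 1) =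
        ∑ j ∈ (straight N h).filter (fun j => j - 1 ∈ straight N h), force N h (j - 1) := by
      rw [Finset.sum_filter]
      refine Finset.sum_congr rfl fun j _ => ?_
      split_ifs with hj
      · rfl
      · exact force_eq_zero hj
    have a2 : ∑ j ∈ straight N h, force N h (j + 1) =
        ∑ j ∈ (straight N h).filter (fun j => j + 1 ∈ straight N h), force N h (j + 1) := by
      rw [Finset.sum_filter]
      refine Finset.sum_congr rfl fun j _ => ?_
      split_ifs with hj
      · rfl
      · exact force_eq_zero hj
    have a3 : ∑ j ∈ (straight N h).filter (fun j => j - 1 ∈ straight N h), force N h (j - 1) =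
        ∑ j ∈ (straight N h).filter (fun j => j + 1 ∈ straight N h), force N h j := by
      refine Finset.sum_nbij' (· - 1) (· + 1) ?_ ?_ ?_ ?_ ?_ <;> simp +contextual
    rw [a1, a2, a3, sub_nonneg]
    refine Finset.sum_le_sum fun j hj => ?_
    rw [Finset.mem_filter] at hj
    exact hp.force_succ_le hj.1 hj.2
  omega

/-- Total drift of the potential over all movable extrema. -/
lemma IsPath.sum_potential_le (hp : IsPath N h) (hN : 1 ≤ N) :
    ∑ j ∈ movable N h, (potential N (reflectAt h j) : ℤ) + 4 * (movable N h).card ≤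
      (movable N h).card * potential N h := by
  have h1 : ∑ j ∈ movable N h, ((potential N (reflectAt h j) : ℤ) - potential N h) ≤
      ∑ j ∈ movable N h, (2 * (force N h (j - 1) - force N h (j + 1)) - 4) := by
    refine Finset.sum_le_sum fun j hj => ?_
    simp only [movable, Finset.mem_filter, Finset.mem_Ioo] at hj
    exact hp.potential_reflectAt hj.1 hj.2.1 hj.2.2
  have h2 := hp.sum_force_le hN
  rw [Finset.sum_sub_distrib, Finset.sum_sub_distrib, ← Finset.mul_sum, Finset.sum_const,
    Finset.sum_const, nsmul_eq_mul, nsmul_eq_mul] at h1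
  linarith

/-- A path with a straight time has a movable extremum. -/
lemma IsPath.movable_nonempty (hp : IsPath N h) (hs : (straight N h).Nonempty) :
    (movable N h).Nonempty := by
  by_contra hne
  rw [Finset.not_nonempty_iff_eq_empty] at hne
  have hno : ∀ j, 0 < j → j < N → (j - 1 ∈ straight N h ∨ j + 1 ∈ straight N h) →
      j ∈ straight N h := by
    intro j h0 h1 h2
    by_contra h3
    have : j ∈ movable N h := by
      simp only [movable, Finset.mem_filter, Finset.mem_Ioo]
      refine ⟨⟨h0, h1⟩, ?_, h2⟩
      by_contra h4
      exact h3 (mem_straight.2 ⟨⟨h0, h1⟩, h4⟩)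
    simp [hne] at this
  obtain ⟨k, hk⟩ := hs
  have hk' := mem_straight.1 hk
  have up : ∀ m, k ≤ m → m < N → m ∈ straight N h := by
    intro m hm
    induction m, hm using Int.leInduction with
    | base => exact fun _ => hk
    | succ m hm ih =>
      intro hmN
      exact hno _ (by omega) hmN (Or.inl (by rw [add_sub_cancel_right]; exact ih (by omega)))
  have down : ∀ m, m ≤ k → 0 < m → m ∈ straight N h := by
    intro m hm
    induction m, hm using Int.leInductionDown with
    | base => exact fun _ => hk
    | pred m hm ih =>
      intro hm0
      exact hno _ hm0 (by omega) (Or.inr (by rw [sub_add_cancel]; exact ih (by omega)))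
  have lin : ∀ m, 0 ≤ m → m < N → h m = m * h 1 ∧ h (m + 1) = (m + 1) * h 1 := by
    intro m hm
    induction m, hm using Int.leInduction with
    | base => intro; simp [hp.start]
    | succ m hm ih =>
      intro hmN
      obtain ⟨i1, i2⟩ := ih (by omega)
      have hst : m + 1 ∈ straight N h := by
        rcases le_total k (m + 1) with h | h
        · exact up _ h hmN
        · exact down _ h (by omega)
      have := (mem_straight.1 hst).2
      rw [add_sub_cancel_right] at this
      have s1 := hp.step m hm (by omega)
      have s2 := hp.step (m + 1) (by omega) hmN
      refine ⟨i2, ?_⟩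
      have : h (m + 1 + 1) = 2 * h (m + 1) - h m := by omega
      rw [this, i1, i2]; ring
  have hl := (lin (N - 1) (by omega) (by omega)).2
  rw [sub_add_cancel, hp.finish] at hl
  have s1 := hp.step 0 le_rfl (by omega)
  rw [hp.start, zero_add] at s1
  have : N = 0 ∨ h 1 = 0 := by simpa using hl.symm
  omega

lemma IsPath.mem_movable_iff (hp : IsPath N h) (hs : (straight N h).Nonempty) {j : ℤ} :
    j ∈ movable N h ↔ (0 < j ∧ j < N) ∧ h (j - 1) = h (j + 1) ∧
      (straight N (reflectAt h j)).card ≤ (straight N h).card := by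
  simp only [movable, Finset.mem_filter, Finset.mem_Ioo]
  refine and_congr_right fun hj => and_congr_right fun e => ?_
  have hm := fun i => mem_straight_reflectAt (i := i) hp hj e
  constructor
  · intro ha
    have key : ∀ a b, (a = j - 1 ∧ b = j + 1 ∨ a = j + 1 ∧ b = j - 1) → a ∈ straight N h →
        (straight N (reflectAt h j)).card ≤ (straight N h).card := by
      intro a b hab ha
      have hsub : straight N (reflectAt h j) ⊆ insert b ((straight N h).erase a) := by
        intro i hi
        rw [hm] at hi
        simp only [Finset.mem_insert, Finset.mem_erase]
        split_ifs at hi with h1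
        · by_cases hia : i = a
          · subst hia; exact absurd ha hi.2
          · left; omega
        · exact Or.inr ⟨by omega, hi⟩
      refine (Finset.card_le_card hsub).trans ((Finset.card_insert_le _ _).trans ?_)
      rw [Finset.card_erase_add_one ha]
    rcases ha with ha | ha
    · exact key _ _ (Or.inl ⟨rfl, rfl⟩) ha
    · exact key _ _ (Or.inr ⟨rfl, rfl⟩) ha
  · intro hc
    by_contra hno
    push Not at hno
    have hsub : straight N h ⊆ straight N (reflectAt h j) := by
      intro i hi
      rw [hm, if_neg]
      · exact hi
      · rintro (rfl | rfl)
        · exact hno.1 hi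
        · exact hno.2 hi
    have heq := Finset.eq_of_subset_of_card_le hsub hc
    have n1 : ¬(0 < j - 1) := by
      intro h0
      refine hno.1 ?_
      rw [heq, hm, if_pos (Or.inl rfl)]
      exact ⟨by omega, hno.1⟩
    have n2 : ¬(j + 1 < N) := by
      intro h0
      refine hno.2 ?_
      rw [heq, hm, if_pos (Or.inr rfl)]
      exact ⟨by omega, hno.2⟩
    obtain ⟨k, hk⟩ := hs
    have hk := mem_straight.1 hk
    exact hk.2 (by rw [show k = j by omega]; exact e)

end Path

/-- The height path of a word, indexed by `ℤ`. -/
noncomputable def pathOf (w : Word) (z : ℤ) : ℤ :=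
  ∑ m ∈ Finset.range z.toNat, if w.getD m true then 1 else -1

lemma pathOf_succ (w : Word) (k : ℕ) :
    pathOf w (k + 1) = pathOf w k + if w.getD k true then 1 else -1 := by
  have : ((k : ℤ) + 1).toNat = k + 1 := by omega
  simp only [pathOf, this, Int.toNat_natCast, Finset.sum_range_succ]

lemma pathOf_length (w : Word) : pathOf w w.length = 2 * w.count true - w.length := by
  simp only [pathOf, Int.toNat_natCast]
  induction w with
  | nil => simp
  | cons a w ih =>
    rw [List.length_cons, Finset.sum_range_succ']
    simp only [List.getD_cons_succ, List.getD_cons_zero]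
    rw [ih]
    cases a <;> simp <;> ring

lemma getD_flip {w : Word} {i : ℕ} (hi : i + 1 < w.length) (m : ℕ) :
    (flip w i).getD m true =
      if m = i then w.getD (i + 1) true else if m = i + 1 then w.getD i true
      else w.getD m true := by
  simp only [flip, List.getD_eq_getElem?_getD (l := List.set _ _ _), List.getElem?_set,
    List.length_set]
  by_cases h1 : m = i
  · subst h1
    simp [show m < w.length by omega]
  · by_cases h2 : m = i + 1
    · subst h2
      simp [hi]
    · rw [if_neg (Ne.symm h2), if_neg (Ne.symm h1), if_neg h1, if_neg h2,
        List.getD_eq_getElem?_getD]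

lemma length_flip (w : Word) (i : ℕ) : (flip w i).length = w.length := by
  simp [flip]

lemma isPath_of_isConfig {n : ℕ} {w : Word} (hw : IsConfig n w) :
    IsPath ((2 * n : ℕ) : ℤ) (pathOf w) where
  start := by simp [pathOf]
  finish := by rw [← hw.1, pathOf_length, hw.1, hw.2]; push_cast; ring
  step k h0 _ := by
    lift k to ℕ using h0
    rw [pathOf_succ]
    split_ifs
    · exact Or.inl rfl
    · exact Or.inr rfl

lemma pathOf_flip {w : Word} {i : ℕ} (hi : i + 1 < w.length)
    (hne : w.getD i true ≠ w.getD (i + 1) true) :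
    pathOf (flip w i) = reflectAt (pathOf w) (i + 1) := by
  have hlow : ∀ k : ℕ, k ≤ i → pathOf (flip w i) k = pathOf w k := by
    intro k hk
    simp only [pathOf, Int.toNat_natCast]
    refine Finset.sum_congr rfl fun m hm => ?_
    have := Finset.mem_range.1 hm
    rw [getD_flip hi, if_neg (show ¬m = i by omega), if_neg (show ¬m = i + 1 by omega)]
  have hmid : pathOf (flip w i) (i + 1) = 2 * pathOf w i - pathOf w (i + 1) := by
    rw [pathOf_succ, pathOf_succ, hlow i le_rfl, getD_flip hi, if_pos rfl]
    cases h1 : w.getD i true <;> cases h2 : w.getD (i + 1) true <;> simp_all <;> ring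
  have hhigh : ∀ k : ℕ, i + 2 ≤ k → pathOf (flip w i) k = pathOf w k := by
    intro k hk
    induction k, hk using Nat.le_induction with
    | base =>
      have e : ((i + 2 : ℕ) : ℤ) = ((i + 1 : ℕ) : ℤ) + 1 := by push_cast; ring
      rw [e, pathOf_succ, pathOf_succ, Nat.cast_add_one, hmid, pathOf_succ, getD_flip hi,
        if_neg (show ¬i + 1 = i by omega), if_pos rfl]
      cases h1 : w.getD i true <;> cases h2 : w.getD (i + 1) true <;> simp_all <;> ring
    | succ k hk ih =>
      rw [Nat.cast_add_one, pathOf_succ, pathOf_succ, ih, getD_flip hi,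
        if_neg (show ¬k = i by omega), if_neg (show ¬k = i + 1 by omega)]
  funext z
  have hz : ∀ v : Word, pathOf v z = pathOf v (z.toNat : ℤ) := by
    intro v; simp only [pathOf, Int.toNat_natCast]
  unfold reflectAt
  by_cases h : z = i + 1
  · subst h
    rw [Function.update_self, add_sub_cancel_right, hmid]
  · rw [Function.update_of_ne h, hz, hz w]
    by_cases h' : z.toNat ≤ i
    · exact hlow _ h'
    · exact hhigh _ (by omega)

lemma isConfig_flip {n : ℕ} {w : Word} (hw : IsConfig n w) {i : ℕ} (hi : i + 1 < w.length)
    (hne : w.getD i true ≠ w.getD (i + 1) true) : IsConfig n (flip w i) := by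
  refine ⟨by rw [length_flip, hw.1], ?_⟩
  have h1 := pathOf_length (flip w i)
  have h2 := pathOf_length w
  rw [pathOf_flip hi hne, length_flip, reflectAt, Function.update_of_ne (by omega)] at h1
  have := hw.2
  omega

lemma getD_eq_iff_pathOf (w : Word) (k : ℕ) :
    w.getD k true = w.getD (k + 1) true ↔ pathOf w k ≠ pathOf w (k + 2) := by
  have : (k : ℤ) + 2 = ((k + 1 : ℕ) : ℤ) + 1 := by push_cast; ring
  rw [this, pathOf_succ, Nat.cast_add_one, pathOf_succ]
  cases w.getD k true <;> cases w.getD (k + 1) true <;> simp <;> omega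

lemma mismatches_eq_card_range (w : Word) :
    mismatches w = ((Finset.range (w.length - 1)).filter
      fun k => w.getD k true = w.getD (k + 1) true).card := by
  rw [Finset.card_filter]
  induction w with
  | nil => simp [mismatches]
  | cons a w ih =>
    cases w with
    | nil => simp [mismatches]
    | cons b w =>
      have e : mismatches (a :: b :: w) = mismatches (b :: w) + if a = b then 1 else 0 := by
        simp [mismatches, List.countP_cons]
      rw [e, ih]
      simp only [List.length_cons, Nat.add_sub_cancel]
      rw [Finset.sum_range_succ']
      simp

lemma mismatches_eq_card_straight {N : ℕ} {w : Word} (hw : w.length = N) :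
    mismatches w = (straight N (pathOf w)).card := by
  rw [mismatches_eq_card_range]
  refine Finset.card_nbij' (fun k => (k : ℤ) + 1) (fun j => (j - 1).toNat) ?_ ?_ ?_ ?_
  · intro k hk
    simp only [Finset.coe_filter, Finset.mem_range, Set.mem_ofPred_eq, getD_eq_iff_pathOf] at hk
    simp only [Finset.mem_coe, mem_straight]
    refine ⟨by omega, ?_⟩
    rw [add_sub_cancel_right, add_assoc]
    exact hk.2
  · intro j hj
    rw [Finset.mem_coe, mem_straight] at hj
    obtain ⟨k, rfl⟩ : ∃ k : ℕ, j = k + 1 := ⟨(j - 1).toNat, by omega⟩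
    rw [add_sub_cancel_right, add_assoc] at hj
    simp only [Finset.coe_filter, Finset.mem_range, Set.mem_ofPred_eq, getD_eq_iff_pathOf,
      add_sub_cancel_right, Int.toNat_natCast]
    exact ⟨by omega, hj.2⟩
  · intro k _
    simp
  · intro j hj
    rw [Finset.mem_coe, mem_straight] at hj
    simp only
    omega

lemma mem_allowedFlips {w : Word} {i : ℕ} : i ∈ allowedFlips w ↔
    i < w.length ∧ (i + 1 < w.length ∧ w.getD i true ≠ w.getD (i + 1) true) ∧
      mismatches (flip w i) ≤ mismatches w := by
  rw [allowedFlips, Finset.mem_filter, Finset.mem_range, CanFlip]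

lemma mem_allowedFlips_iff {n : ℕ} {w : Word} (hw : IsConfig n w) (hm : mismatches w ≠ 0)
    (i : ℕ) : i ∈ allowedFlips w ↔ (i : ℤ) + 1 ∈ movable (2 * n : ℕ) (pathOf w) := by
  have hs : (straight (2 * n : ℕ) (pathOf w)).Nonempty := by
    rw [← Finset.card_ne_zero, ← mismatches_eq_card_straight hw.1]
    exact hm
  rw [(isPath_of_isConfig hw).mem_movable_iff hs, add_sub_cancel_right, add_assoc]
  rw [mem_allowedFlips]
  constructor
  · rintro ⟨_, ⟨h1, h2⟩, h3⟩
    refine ⟨by rw [hw.1] at h1; omega, ?_, ?_⟩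
    · by_contra h
      exact h2 ((getD_eq_iff_pathOf w i).2 h)
    · rw [← pathOf_flip h1 h2, ← mismatches_eq_card_straight hw.1,
        ← mismatches_eq_card_straight (by rw [length_flip, hw.1])]
      exact h3
  · rintro ⟨h1, h2, h3⟩
    have h1' : i + 1 < w.length := by rw [hw.1]; omega
    have h2' : w.getD i true ≠ w.getD (i + 1) true := fun h =>
      (getD_eq_iff_pathOf w i).1 h h2
    refine ⟨by omega, ⟨h1', h2'⟩, ?_⟩
    rw [← pathOf_flip h1' h2', ← mismatches_eq_card_straight hw.1,
      ← mismatches_eq_card_straight (by rw [length_flip, hw.1])] at h3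
    exact h3

/-- The potential of a word of length `2 * n`. -/
noncomputable def wordPotential (n : ℕ) (w : Word) : ℕ := potential (2 * n : ℕ) (pathOf w)

lemma allowedFlips_nonempty {n : ℕ} {w : Word} (hw : IsConfig n w) (hm : mismatches w ≠ 0) :
    (allowedFlips w).Nonempty := by
  have hs : (straight (2 * n : ℕ) (pathOf w)).Nonempty := by
    rw [← Finset.card_ne_zero, ← mismatches_eq_card_straight hw.1]
    exact hm
  obtain ⟨j, hj⟩ := (isPath_of_isConfig hw).movable_nonempty hs
  have : 0 < j := by
    simp only [movable, Finset.mem_filter, Finset.mem_Ioo] at hj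
    exact hj.1.1
  refine ⟨(j - 1).toNat, ?_⟩
  rw [mem_allowedFlips_iff hw hm]
  convert hj using 1
  omega

lemma sum_wordPotential_le {n : ℕ} {w : Word} (hw : IsConfig n w) (hm : mismatches w ≠ 0) :
    ∑ i ∈ allowedFlips w, wordPotential n (flip w i) + 4 * (allowedFlips w).card ≤
      (allowedFlips w).card * wordPotential n w := by
  have hpos : ∀ j ∈ movable (2 * n : ℕ) (pathOf w), 0 < j ∧ j < (2 * n : ℕ) := by
    intro j hj
    simp only [movable, Finset.mem_filter, Finset.mem_Ioo] at hj
    exact hj.1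
  have hmem := mem_allowedFlips_iff hw hm
  have himage : movable (2 * n : ℕ) (pathOf w) =
      (allowedFlips w).image (fun i : ℕ => (i : ℤ) + 1) := by
    ext j
    rw [Finset.mem_image]
    constructor
    · intro hj
      have := hpos j hj
      have e : ((j - 1).toNat : ℤ) + 1 = j := by omega
      exact ⟨(j - 1).toNat, (hmem _).2 (by rwa [e]), e⟩
    · rintro ⟨i, hi, rfl⟩
      exact (hmem i).1 hi
  have hinj : Function.Injective (fun i : ℕ => (i : ℤ) + 1) := by
    intro a b h
    simpa using h
  have hN : (1 : ℤ) ≤ (2 * n : ℕ) := by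
    obtain ⟨i, hi⟩ := allowedFlips_nonempty hw hm
    have := hpos _ ((hmem i).1 hi)
    omega
  have key := (isPath_of_isConfig hw).sum_potential_le hN
  rw [himage, Finset.sum_image hinj.injOn, Finset.card_image_of_injective _ hinj] at key
  have e : ∑ i ∈ allowedFlips w, (wordPotential n (flip w i) : ℤ) =
      ∑ i ∈ allowedFlips w, (potential (2 * n : ℕ) (reflectAt (pathOf w) (i + 1)) : ℤ) := by
    refine Finset.sum_congr rfl fun i hi => ?_
    rw [mem_allowedFlips] at hi
    rw [wordPotential, pathOf_flip hi.2.1.1 hi.2.1.2]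
  rw [← e] at key
  unfold wordPotential at *
  exact_mod_cast key

/-- Expectation of a nonnegative function under a probability mass function. -/
noncomputable def mean {α : Type*} (p : PMF α) (V : α → ℝ≥0∞) : ℝ≥0∞ := ∑' a, p a * V a

lemma mean_mono {α : Type*} (p : PMF α) {V W : α → ℝ≥0∞} (h : ∀ a, V a ≤ W a) :
    mean p V ≤ mean p W :=
  ENNReal.tsum_le_tsum fun a => by gcongr; exact h a

lemma mean_add {α : Type*} (p : PMF α) (V W : α → ℝ≥0∞) :
    mean p (fun a => V a + W a) = mean p V + mean p W := by
  simp only [mean, mul_add, ENNReal.tsum_add]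

lemma mean_pure {α : Type*} (a : α) (V : α → ℝ≥0∞) : mean (PMF.pure a) V = V a := by
  rw [mean, tsum_eq_single a]
  · simp
  · intro b hb
    simp [hb]

lemma mean_bind {α β : Type*} (p : PMF α) (f : α → PMF β) (V : β → ℝ≥0∞) :
    mean (p.bind f) V = mean p fun a => mean (f a) V := by
  simp only [mean, PMF.bind_apply, ← ENNReal.tsum_mul_right, ← ENNReal.tsum_mul_left]
  rw [ENNReal.tsum_comm]
  simp only [mul_assoc]

lemma mean_map {α β : Type*} (p : PMF α) (f : α → β) (V : β → ℝ≥0∞) :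
    mean (p.map f) V = mean p fun a => V (f a) := by
  rw [← PMF.bind_pure_comp, mean_bind]
  simp [mean_pure]

lemma mean_uniformOfFinset {α : Type*} (s : Finset α) (hs : s.Nonempty) (V : α → ℝ≥0∞) :
    mean (PMF.uniformOfFinset s hs) V = (s.card : ℝ≥0∞)⁻¹ * ∑ a ∈ s, V a := by
  rw [mean, tsum_eq_sum (s := s), Finset.mul_sum]
  · refine Finset.sum_congr rfl fun a ha => ?_
    rw [PMF.uniformOfFinset_apply_of_mem hs ha]
  · intro a ha
    rw [PMF.uniformOfFinset_apply_of_notMem hs ha, zero_mul]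

/-- A Lyapunov function decreasing by one in mean before absorption bounds the expected
convergence time. -/
lemma expConvTime_le_of_drift (V : Word → ℝ≥0∞)
    (hV : ∀ u, mean (coolStep u) V + (if mismatches u ≠ 0 then 1 else 0) ≤ V u) (w : Word) :
    expConvTime w ≤ V w := by
  have hstep : ∀ t, mean (coolDist w (t + 1)) V +
      (coolDist w t).toOuterMeasure {v | mismatches v ≠ 0} ≤ mean (coolDist w t) V := by
    intro t
    have e : (coolDist w t).toOuterMeasure {v | mismatches v ≠ 0} =
        mean (coolDist w t) fun u => if mismatches u ≠ 0 then 1 else 0 := by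
      rw [PMF.toOuterMeasure_apply, mean]
      refine tsum_congr fun u => ?_
      simp [Set.indicator_apply]
    rw [e, coolDist, mean_bind, ← mean_add]
    exact mean_mono _ hV
  have hsum : ∀ T, mean (coolDist w T) V +
      ∑ t ∈ Finset.range T, (coolDist w t).toOuterMeasure {v | mismatches v ≠ 0} ≤ V w := by
    intro T
    induction T with
    | zero => simp [coolDist, mean_pure]
    | succ T ih =>
      rw [Finset.sum_range_succ, add_comm (∑ t ∈ _, _), ← add_assoc]
      exact (add_le_add_left (hstep T) _).trans ih
  unfold expConvTime
  rw [ENNReal.tsum_eq_iSup_nat]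
  exact iSup_le fun T => le_add_self.trans (hsum T)

lemma expConvTime_le_wordPotential {n : ℕ} {w : Word} (hw : IsConfig n w) :
    expConvTime w ≤ wordPotential n w := by
  have h := expConvTime_le_of_drift (fun u => if IsConfig n u then (wordPotential n u : ℝ≥0∞)
    else ⊤) ?_ w
  · simpa [hw] using h
  intro u
  by_cases hu : IsConfig n u
  · by_cases hm : mismatches u = 0
    · simp [coolStep, hm, mean_pure, hu]
    · have hne := allowedFlips_nonempty hu hm
      rw [coolStep, dif_pos ⟨hm, hne⟩, mean_map, mean_uniformOfFinset, if_pos hm, if_pos hu]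
      have e : ∑ i ∈ allowedFlips u, (if IsConfig n (flip u i) then
          (wordPotential n (flip u i) : ℝ≥0∞) else ⊤) =
          ((∑ i ∈ allowedFlips u, wordPotential n (flip u i) : ℕ) : ℝ≥0∞) := by
        push_cast
        refine Finset.sum_congr rfl fun i hi => ?_
        rw [mem_allowedFlips] at hi
        rw [if_pos (isConfig_flip hu hi.2.1.1 hi.2.1.2)]
      have hc0 : ((allowedFlips u).card : ℝ≥0∞) ≠ 0 := by
        simpa using hne.ne_empty
      have hct : ((allowedFlips u).card : ℝ≥0∞) ≠ ⊤ := ENNReal.natCast_ne_top _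
      have key := sum_wordPotential_le hu hm
      have key' : ((∑ i ∈ allowedFlips u, wordPotential n (flip u i) : ℕ) : ℝ≥0∞) +
          (allowedFlips u).card ≤ (allowedFlips u).card * wordPotential n u := by
        have : ∑ i ∈ allowedFlips u, wordPotential n (flip u i) + (allowedFlips u).card ≤
          (allowedFlips u).card * wordPotential n u := by omega
        exact_mod_cast this
      rw [e]
      calc _ = ((allowedFlips u).card : ℝ≥0∞)⁻¹ *
            (((∑ i ∈ allowedFlips u, wordPotential n (flip u i) : ℕ) : ℝ≥0∞) +
              (allowedFlips u).card) := by
              rw [mul_add, ENNReal.inv_mul_cancel hc0 hct]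
        _ ≤ ((allowedFlips u).card : ℝ≥0∞)⁻¹ *
            ((allowedFlips u).card * wordPotential n u) := by gcongr
        _ = wordPotential n u := by
            rw [← mul_assoc, ENNReal.inv_mul_cancel hc0 hct, one_mul]
  · simp [hu]

/-- the worst expected convergence time of the cooling process is `O(n³)`. -/
theorem worst_expected_convergence_time_cubic :
    ∃ C : ℝ, 0 < C ∧ ∀ n : ℕ, 1 ≤ n → ∀ w : Word, IsConfig n w →
      expConvTime w ≤ ENNReal.ofReal (C * (n : ℝ) ^ 3) := by
  refine ⟨180, by norm_num, fun n hn w hw => (expConvTime_le_wordPotential hw).trans ?_⟩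
  rw [← ENNReal.ofReal_natCast]
  refine ENNReal.ofReal_le_ofReal ?_
  have h1 := potential_le (N := (2 * n : ℕ)) (h := pathOf w) (by omega)
  have h2 : (wordPotential n w : ℝ) ≤ (2 * (2 * n) + 1) * (9 * (2 * n) ^ 2) := by
    unfold wordPotential
    exact_mod_cast h1
  have h3 : (1 : ℝ) ≤ n := by exact_mod_cast hn
  have h4 : (0 : ℝ) ≤ (n : ℝ) ^ 2 := by positivity
  nlinarith

end Cooling
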